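/- For every n ≥ 2, the olive tree O_n satisfies χ_L(O_n) = ⌈log_3(n/4)⌉ + 3. -/

import Mathlib

open SimpleGraph

/-- Distance from a vertex to a set of vertices, `d(u,S) = min {d(u,v) : v ∈ S}`. -/
noncomputable def distToSet {V : Type*} (G : SimpleGraph V) (u : V) (S : Set V) : ℕ :=
  sInf (G.dist u '' S)

/-- `c` is a locating coloring of `G` with `k` colors: a proper coloring such that any two
distinct vertices are resolved by some color class. -/
def IsLocatingColoring {V : Type*} (G : SimpleGraph V) {k : ℕ} (c : V → Fin k) : Prop :=
  (∀ u v : V, G.Adj u v → c u ≠ c v) ∧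
  ∀ u v : V, u ≠ v →
    ∃ i : Fin k, distToSet G u (c ⁻¹' {i}) ≠ distToSet G v (c ⁻¹' {i})

/-- The locating chromatic number `χ_L(G)`: the least `k` admitting a locating `k`-coloring. -/
noncomputable def locatingChromaticNumber {V : Type*} (G : SimpleGraph V) : ℕ :=
  sInf {k : ℕ | ∃ c : V → Fin k, IsLocatingColoring G c}

/-- The vertex set of the palm `S_n(a_1, …, a_n)`: a hub `none` and, for each leg
`i : Fin n` (representing leg `i+1`), vertices `j : Fin (a (i+1))`
(vertex `some ⟨i, j⟩` represents `a_{i+1, j+1}`). -/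
def PalmVert (n : ℕ) (a : ℕ → ℕ) : Type :=
  Option ((i : Fin n) × Fin (a ((i : ℕ) + 1)))

/-- The palm `S_n(a_1, …, a_n)`: the star `K_{1,n}` whose `i`-th edge has been subdivided
`a_i - 1` times; the hub is joined to the first vertex of each leg, and consecutive
vertices along a leg are adjacent. -/
def Palm (n : ℕ) (a : ℕ → ℕ) : SimpleGraph (PalmVert n a) :=
  SimpleGraph.fromRel fun u v =>
    match u, v with
    | none, some ⟨_, j⟩ => (j : ℕ) = 0
    | some ⟨i, j⟩, some ⟨i', j'⟩ => (i : ℕ) = (i' : ℕ) ∧ (j' : ℕ) = (j : ℕ) + 1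
    | _, _ => False

section DistToSet

variable {V : Type*} {G : SimpleGraph V}

theorem distToSet_le_dist {S : Set V} (u : V) {v : V} (hv : v ∈ S) :
    distToSet G u S ≤ G.dist u v :=
  Nat.sInf_le ⟨v, hv, rfl⟩

theorem exists_dist_eq_distToSet {S : Set V} (hS : S.Nonempty) (u : V) :
    ∃ v ∈ S, G.dist u v = distToSet G u S :=
  Nat.sInf_mem (hS.image (G.dist u))

theorem distToSet_empty (u : V) : distToSet G u ∅ = 0 := by
  simp [distToSet]

theorem distToSet_le_add_one {u v : V} (h : G.Adj u v) (S : Set V) :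
    distToSet G u S ≤ distToSet G v S + 1 := by
  rcases S.eq_empty_or_nonempty with rfl | hS
  · simp [distToSet_empty]
  obtain ⟨w, hw, hd⟩ := exists_dist_eq_distToSet hS v (G := G)
  have h₁ := distToSet_le_dist (G := G) u hw
  have h₂ := h.symm.diff_dist_adj (u := w)
  rw [G.dist_comm (u := w) (v := u), G.dist_comm (u := w) (v := v)] at h₂
  omega

theorem distToSet_eq_zero_of_mem {S : Set V} {u : V} (hu : u ∈ S) : distToSet G u S = 0 := by
  simpa using distToSet_le_dist (G := G) u hu

theorem distToSet_pos_of_notMem (hG : G.Connected) {S : Set V} (hS : S.Nonempty) {u : V}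
    (hu : u ∉ S) : 0 < distToSet G u S := by
  obtain ⟨w, hw, hd⟩ := exists_dist_eq_distToSet hS u (G := G)
  rw [← hd]
  exact hG.pos_dist_of_ne fun h => hu (h ▸ hw)

/-- The distances from a set that are possible at a neighbour of a vertex of color `c₀`, when the
neighbour has color `j`, the colors in `A` occur next to that vertex, and the vertex itself lies at
distance `e i` from each color `i`. -/
def neighborDistances {ι : Type*} [DecidableEq ι] (c₀ : ι) (A : Finset ι) (e : ι → ℕ) (j i : ι) :
    Finset ℕ :=
  if i = c₀ then {1} else if i = j then {0} else if i ∈ A then {1, 2} else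
    Finset.Icc (e i - 1) (e i + 1)

theorem prod_card_neighborDistances_le {k : ℕ} {c₀ j : Fin k} {A : Finset (Fin k)} (hc₀ : c₀ ∉ A)
    (hj : j ∈ A) (e : Fin k → ℕ) :
    ∏ i, (neighborDistances c₀ A e j i).card ≤ 2 ^ (A.card - 1) * 3 ^ (k - 1 - A.card) := by
  classical
  have hle : ∀ i, (neighborDistances c₀ A e j i).card ≤
      (if i ∈ A.erase j then 2 else 1) * (if i ∈ (insert c₀ A)ᶜ then 3 else 1) := by
    intro i
    simp only [neighborDistances, Finset.mem_erase, Finset.mem_compl, Finset.mem_insert]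
    split_ifs <;> simp_all
    omega
  calc ∏ i, (neighborDistances c₀ A e j i).card
      ≤ ∏ i, ((if i ∈ A.erase j then 2 else 1) * (if i ∈ (insert c₀ A)ᶜ then 3 else 1)) :=
        Finset.prod_le_prod' fun i _ => hle i
    _ = 2 ^ (A.card - 1) * 3 ^ (k - 1 - A.card) := by
        rw [Finset.prod_mul_distrib, Finset.prod_ite_mem, Finset.prod_ite_mem]
        simp only [Finset.univ_inter, Finset.prod_const, Finset.card_erase_of_mem hj,
          Finset.card_compl, Finset.card_insert_of_notMem hc₀, Fintype.card_fin]
        congr 2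
        omega

theorem mul_two_pow_mul_nine_le (m : ℕ) : 9 * ((m + 1) * 2 ^ m) ≤ 4 * 3 ^ (m + 1) := by
  rcases m with _ | m
  · norm_num
  induction m with
  | zero => norm_num
  | succ m ih =>
    rw [pow_succ 3, pow_succ 2]
    nlinarith [Nat.zero_le (m * 2 ^ (m + 1))]

theorem IsLocatingColoring.nine_mul_le {k n : ℕ} (hG : G.Connected) {c : V → Fin k}
    (hc : IsLocatingColoring G c) {x : V} {f : Fin n → V} (hf : f.Injective)
    (hadj : ∀ s, G.Adj x (f s)) (hn : 0 < n) : 9 * n ≤ 4 * 3 ^ (k - 1) := by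
  classical
  set A : Finset (Fin k) := Finset.univ.image (c ∘ f) with hA
  have hfA : ∀ s, c (f s) ∈ A := fun s => Finset.mem_image_of_mem (c ∘ f) (Finset.mem_univ s)
  have hx : c x ∉ A := by
    simp only [hA, Finset.mem_image, Finset.mem_univ, true_and, Function.comp, not_exists]
    exact fun s hs => hc.1 _ _ (hadj s) hs.symm
  set e : Fin k → ℕ := fun i => distToSet G x (c ⁻¹' {i}) with he
  have hfiber : ∀ j ∈ A, (Finset.univ.filter fun s => (c ∘ f) s = j).card ≤
      2 ^ (A.card - 1) * 3 ^ (k - 1 - A.card) := by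
    intro j hj
    refine le_trans ?_ (prod_card_neighborDistances_le hx hj e)
    rw [← Fintype.card_piFinset]
    refine Finset.card_le_card_of_injOn (fun s i => distToSet G (f s) (c ⁻¹' {i})) ?_ ?_
    · intro s hs
      have hs : c (f s) = j := by simpa using hs
      simp only [Finset.mem_coe, Fintype.mem_piFinset]
      intro i
      have h₁ := distToSet_le_add_one (hadj s) (c ⁻¹' {i})
      have h₂ := distToSet_le_add_one (hadj s).symm (c ⁻¹' {i})
      unfold neighborDistances
      split_ifs with hi hij hiA
      · subst hi
        have h0 : distToSet G x (c ⁻¹' {c x}) = 0 := distToSet_eq_zero_of_mem rfl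
        have := distToSet_pos_of_notMem hG (S := c ⁻¹' {c x}) ⟨x, rfl⟩
          (u := f s) fun h => hc.1 _ _ (hadj s) h.symm
        simp only [Finset.mem_singleton]
        omega
      · simp only [Finset.mem_singleton]
        exact distToSet_eq_zero_of_mem (hs.trans hij.symm)
      · obtain ⟨t, -, ht⟩ := Finset.mem_image.1 hiA
        have h3 : distToSet G x (c ⁻¹' {i}) ≤ 1 := by
          rw [← SimpleGraph.dist_eq_one_iff_adj.2 (hadj t)]
          exact distToSet_le_dist _ ht
        have := distToSet_pos_of_notMem hG (S := c ⁻¹' {i}) ⟨f t, ht⟩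
          (u := f s) fun h => hij ((Set.mem_singleton_iff.1 h).symm.trans hs)
        simp only [Finset.mem_insert, Finset.mem_singleton]
        omega
      · simp only [Finset.mem_Icc, he]
        omega
    · intro s _ t _ hst
      by_contra hne
      obtain ⟨i, hi⟩ := hc.2 (f s) (f t) (hf.ne hne)
      exact hi (congrFun hst i)
  have hcard := Finset.card_le_mul_card_image_of_maps_to (s := Finset.univ) (t := A)
    (fun s _ => hfA s) _ hfiber
  have hApos : 0 < A.card := Finset.card_pos.2 ⟨_, hfA ⟨0, hn⟩⟩
  have hAk : A.card + 1 ≤ k := by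
    simpa [Finset.card_insert_of_notMem hx] using Finset.card_le_univ (insert (c x) A)
  obtain ⟨m, hm⟩ : ∃ m, A.card = m + 1 := ⟨A.card - 1, by omega⟩
  obtain ⟨a, ha⟩ : ∃ a, k - 1 = m + 1 + a := ⟨k - 1 - (m + 1), by omega⟩
  simp only [Finset.card_univ, Fintype.card_fin, hm, ha, Nat.add_sub_cancel,
    Nat.add_sub_cancel_left] at hcard
  calc 9 * n ≤ 9 * (2 ^ m * 3 ^ a * (m + 1)) := by omega
    _ = 9 * ((m + 1) * 2 ^ m) * 3 ^ a := by ring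
    _ ≤ 4 * 3 ^ (m + 1) * 3 ^ a := Nat.mul_le_mul_right _ (mul_two_pow_mul_nine_le m)
    _ = 4 * 3 ^ (k - 1) := by rw [ha, pow_add _ (m + 1) a, mul_assoc]

end DistToSet

namespace PalmVert

variable {n : ℕ} {a : ℕ → ℕ}

/-- The distance of a vertex of a palm from the hub. -/
def depth : PalmVert n a → ℕ
  | none => 0
  | some ⟨_, j⟩ => j + 1

/-- The index of the leg containing a vertex of a palm; it is `0` for the hub. -/
def leg : PalmVert n a → ℕ
  | none => 0
  | some ⟨i, _⟩ => i

/-- The distance between two vertices of a palm, as an explicit formula. -/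
def explicitDist (u v : PalmVert n a) : ℕ :=
  if u.leg = v.leg then (u.depth - v.depth) + (v.depth - u.depth) else u.depth + v.depth

/-- The vertex at depth `p + 1` of the leg `s`. -/
def onLeg (s p : ℕ) (hs : s < n) (hp : p < a (s + 1)) : PalmVert n a :=
  some ⟨⟨s, hs⟩, ⟨p, hp⟩⟩

/-- The hub of a palm. -/
def hub : PalmVert n a := none

@[simp] theorem depth_hub : (hub : PalmVert n a).depth = 0 := rfl

@[simp] theorem leg_hub : (hub : PalmVert n a).leg = 0 := rfl

@[simp] theorem depth_onLeg {s p : ℕ} (hs : s < n) (hp : p < a (s + 1)) :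
    (onLeg s p hs hp).depth = p + 1 := rfl

@[simp] theorem leg_onLeg {s p : ℕ} (hs : s < n) (hp : p < a (s + 1)) :
    (onLeg s p hs hp).leg = s := rfl

theorem explicitDist_hub (v : PalmVert n a) : explicitDist hub v = v.depth := by
  simp [explicitDist]

theorem eq_hub_or_eq_onLeg (u : PalmVert n a) :
    u = hub ∨ ∃ s p, ∃ (hs : s < n) (hp : p < a (s + 1)), u = onLeg s p hs hp := by
  rcases u with _ | ⟨⟨s, hs⟩, ⟨p, hp⟩⟩
  · exact Or.inl rfl
  · exact Or.inr ⟨s, p, hs, hp, rfl⟩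

theorem ext_leg_depth {u v : PalmVert n a} (hl : u.leg = v.leg) (hd : u.depth = v.depth) :
    u = v := by
  rcases eq_hub_or_eq_onLeg u with rfl | ⟨s, p, hs, hp, rfl⟩ <;>
    rcases eq_hub_or_eq_onLeg v with rfl | ⟨t, q, ht, hq, rfl⟩
  · rfl
  · simp at hd
  · simp at hd
  · simp only [leg_onLeg, depth_onLeg, Nat.add_right_cancel_iff] at hl hd
    subst hl hd
    rfl

theorem leg_eq_zero_of_depth_eq_zero {u : PalmVert n a} (h : u.depth = 0) : u.leg = 0 := by
  rcases eq_hub_or_eq_onLeg u with rfl | ⟨s, p, hs, hp, rfl⟩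
  · rfl
  · simp at h

end PalmVert

namespace Palm

open PalmVert

variable {n : ℕ} {a : ℕ → ℕ}

theorem adj_iff {u v : PalmVert n a} : (Palm n a).Adj u v ↔
    (v.depth = u.depth + 1 ∧ (u.depth = 0 ∨ u.leg = v.leg)) ∨
      (u.depth = v.depth + 1 ∧ (v.depth = 0 ∨ u.leg = v.leg)) := by
  have hne : u.depth ≠ v.depth → u ≠ v := fun h h' => h (congrArg PalmVert.depth h')
  rcases u with _ | ⟨⟨s, hs⟩, ⟨p, hp⟩⟩ <;> rcases v with _ | ⟨⟨t, ht⟩, ⟨q, hq⟩⟩ <;>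
    simp only [PalmVert.depth, PalmVert.leg] at hne ⊢
  · change (_ ≠ _ ∧ (False ∨ False)) ↔ _
    simp
  · change (_ ≠ _ ∧ (q = 0 ∨ False)) ↔ _
    exact ⟨fun ⟨_, h⟩ => by simpa using h, fun h => ⟨hne (by omega), by simpa using h⟩⟩
  · change (_ ≠ _ ∧ (False ∨ p = 0)) ↔ _
    exact ⟨fun ⟨_, h⟩ => by simpa using h, fun h => ⟨hne (by omega), by simpa using h⟩⟩
  · change (_ ≠ _ ∧ ((s = t ∧ q = p + 1) ∨ (t = s ∧ p = q + 1))) ↔ _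
    exact ⟨fun h => by omega, fun h => ⟨hne (by omega), by omega⟩⟩

theorem adj_onLeg_succ {s p : ℕ} (hs : s < n) (hp : p + 1 < a (s + 1)) :
    (Palm n a).Adj (onLeg s (p + 1) hs hp) (onLeg s p hs (by omega)) :=
  adj_iff.2 (by simp)

theorem adj_hub_onLeg {s : ℕ} (hs : s < n) (hp : 0 < a (s + 1)) :
    (Palm n a).Adj hub (onLeg s 0 hs hp) :=
  adj_iff.2 (by simp)

theorem exists_adj_depth (u : PalmVert n a) (h : 0 < u.depth) :
    ∃ w, (Palm n a).Adj u w ∧ w.depth + 1 = u.depth ∧ (w.depth = 0 ∨ w.leg = u.leg) := by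
  rcases eq_hub_or_eq_onLeg u with rfl | ⟨s, _ | p, hs, hp, rfl⟩
  · simp at h
  · exact ⟨hub, (adj_hub_onLeg hs hp).symm, by simp⟩
  · exact ⟨_, adj_onLeg_succ hs hp, by simp⟩

theorem dist_le_explicitDist {u v : PalmVert n a} :
    (Palm n a).Reachable u v ∧ (Palm n a).dist u v ≤ explicitDist u v := by
  suffices h : ∃ w : (Palm n a).Walk u v, w.length ≤ explicitDist u v by
    obtain ⟨w, hw⟩ := h
    exact ⟨⟨w⟩, (SimpleGraph.dist_le w).trans hw⟩
  induction hm : u.depth + v.depth using Nat.strong_induction_on generalizing u v with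
  | _ m ih =>
    have key : ∀ u v : PalmVert n a, u.depth + v.depth = m → v.depth ≤ u.depth →
        ∃ w : (Palm n a).Walk u v, w.length ≤ explicitDist u v := by
      intro u v hm hle
      by_cases huv : u = v
      · subst huv
        exact ⟨SimpleGraph.Walk.nil, by simp⟩
      have hpos : 0 < u.depth := by
        by_contra h0
        have hu : u.depth = 0 := by omega
        have hv : v.depth = 0 := by omega
        exact huv (ext_leg_depth (by
          rw [leg_eq_zero_of_depth_eq_zero hu, leg_eq_zero_of_depth_eq_zero hv]) (by omega))
      obtain ⟨w, hadj, hd, hl⟩ := exists_adj_depth u hpos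
      obtain ⟨p, hp⟩ := ih _ (by omega) (u := w) (v := v) rfl
      refine ⟨.cons hadj p, ?_⟩
      have hne : u.leg = v.leg → u.depth ≠ v.depth := fun h h' => huv (ext_leg_depth h h')
      have hw := fun h => leg_eq_zero_of_depth_eq_zero (u := w) h
      have hv := fun h => leg_eq_zero_of_depth_eq_zero (u := v) h
      rw [SimpleGraph.Walk.length_cons]
      unfold explicitDist at hp ⊢
      split_ifs at hp ⊢ <;> omega
    rcases le_total v.depth u.depth with h | h
    · exact key u v hm h
    · obtain ⟨w, hw⟩ := key v u (by omega) h
      refine ⟨w.reverse, ?_⟩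
      rw [SimpleGraph.Walk.length_reverse]
      refine hw.trans_eq ?_
      unfold explicitDist
      split_ifs <;> omega

theorem connected : (Palm n a).Connected :=
  haveI : Nonempty (PalmVert n a) := ⟨hub⟩
  ⟨fun _ _ => dist_le_explicitDist.1⟩

theorem explicitDist_le_length {u v : PalmVert n a} (p : (Palm n a).Walk u v) :
    explicitDist u v ≤ p.length := by
  induction p with
  | nil => simp [explicitDist]
  | @cons u w v h p ih =>
    have hu := fun h => leg_eq_zero_of_depth_eq_zero (u := u) h
    have hw := fun h => leg_eq_zero_of_depth_eq_zero (u := w) h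
    rw [SimpleGraph.Walk.length_cons]
    rw [adj_iff] at h
    unfold explicitDist at ih ⊢
    split_ifs at ih ⊢ <;> omega

theorem dist_eq (u v : PalmVert n a) : (Palm n a).dist u v = explicitDist u v := by
  refine le_antisymm dist_le_explicitDist.2 ?_
  obtain ⟨p, hp⟩ := connected.exists_walk_length_eq_dist u v
  exact hp ▸ explicitDist_le_length p

end Palm

theorem eq_of_ternary_digits_eq {K x y : ℕ} (hx : x < 3 ^ K) (hy : y < 3 ^ K)
    (h : ∀ r < K, x / 3 ^ r % 3 = y / 3 ^ r % 3) : x = y := by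
  induction K generalizing x y with
  | zero => simp at hx hy; omega
  | succ K ih =>
    have h0 := h 0 (by omega)
    have h3 : x / 3 = y / 3 := by
      refine ih (by rw [pow_succ] at hx; omega) (by rw [pow_succ] at hy; omega) fun r hr => ?_
      have := h (r + 1) (by omega)
      rwa [pow_succ', ← Nat.div_div_eq_div_mul, ← Nat.div_div_eq_div_mul] at this
    simp at h0
    omega

namespace Olive

open PalmVert

/-- The digit governing the color `3 + r` on leg `s`: that color is absent, at depth `3 + 2 * r`,
or at depth `4 + 2 * r` if the digit is `0`, `1` or `2` respectively. -/
def digit (s r : ℕ) : ℕ := s / 4 / 3 ^ r % 3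

/-- The color of the vertex at depth `p` of leg `s` in a locating coloring of the olive tree. Even
depths get `0` and odd depths get `1 + s % 2`, except that the other color among `1, 2` may occur
at depth `2` and each color `3 + r` may occur at depth `3 + 2 * r` or `4 + 2 * r`. -/
def color (s p : ℕ) : ℕ :=
  if p = 2 ∧ (s % 4 = 1 ∨ s % 4 = 2) then 2 - s % 2
  else if 3 ≤ p ∧ digit s ((p - 3) / 2) = 1 + (p - 3) % 2 then 3 + (p - 3) / 2
  else if p % 2 = 0 then 0 else 1 + s % 2

theorem even_of_color_eq_zero {s p : ℕ} (h : color s p = 0) : p % 2 = 0 := by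
  unfold color at h
  split_ifs at h <;> omega

theorem odd_of_color_eq {s p : ℕ} (h : color s p = 1 + s % 2) : p % 2 = 1 := by
  unfold color at h
  split_ifs at h <;> omega

theorem eq_two_of_color_eq {s p : ℕ} (h : color s p = 2 - s % 2) :
    p = 2 ∧ (s % 4 = 1 ∨ s % 4 = 2) := by
  unfold color at h
  split_ifs at h <;> omega

theorem digit_of_color_eq {s p r : ℕ} (h : color s p = 3 + r) :
    (p = 3 + 2 * r ∧ digit s r = 1) ∨ (p = 4 + 2 * r ∧ digit s r = 2) := by
  unfold color at h
  split_ifs at h with h₁ h₂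
  · omega
  · obtain rfl : (p - 3) / 2 = r := by omega
    omega
  · omega
  · omega

@[simp] theorem color_zero (s : ℕ) : color s 0 = 0 := by simp [color]

@[simp] theorem color_one (s : ℕ) : color s 1 = 1 + s % 2 := by simp [color]

theorem color_two {s : ℕ} (h : s % 4 = 1 ∨ s % 4 = 2) : color s 2 = 2 - s % 2 := by
  simp [color, h]

theorem color_of_digit_eq_one {s r : ℕ} (h : digit s r = 1) : color s (3 + 2 * r) = 3 + r := by
  have h₁ : (3 + 2 * r - 3) / 2 = r := by omega
  have h₂ : (3 + 2 * r - 3) % 2 = 0 := by omega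
  unfold color
  rw [h₁, h₂, if_neg (by omega), if_pos ⟨by omega, h⟩]

theorem color_of_digit_eq_two {s r : ℕ} (h : digit s r = 2) : color s (4 + 2 * r) = 3 + r := by
  have h₁ : (4 + 2 * r - 3) / 2 = r := by omega
  have h₂ : (4 + 2 * r - 3) % 2 = 1 := by omega
  unfold color
  rw [h₁, h₂, if_neg (by omega), if_pos ⟨by omega, h⟩]

theorem color_ne_color_succ (s p : ℕ) : color s p ≠ color s (p + 1) := by
  intro h
  rcases Nat.lt_or_ge (color s p) 3 with hlt | hge
  · have h0 := @even_of_color_eq_zero s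
    have h1 := @odd_of_color_eq s
    have h2 := @eq_two_of_color_eq s
    have h01 := @h0 p
    have h02 := @h0 (p + 1)
    have h11 := @h1 p
    have h12 := @h1 (p + 1)
    have h21 := @h2 p
    have h22 := @h2 (p + 1)
    omega
  · obtain ⟨r, hr⟩ := Nat.exists_eq_add_of_le hge
    have h₁ := digit_of_color_eq hr
    have h₂ := digit_of_color_eq (h ▸ hr)
    omega

theorem four_mul_pow_le_of_digit_ne_zero {s r : ℕ} (h : digit s r ≠ 0) : 4 * 3 ^ r ≤ s := by
  by_contra hlt
  refine h ?_
  rw [digit, Nat.div_eq_of_lt (by omega : s / 4 < 3 ^ r)]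

theorem four_add_two_mul_le (r : ℕ) : 4 + 2 * r ≤ 4 * 3 ^ r := by
  induction r with
  | zero => simp
  | succ r ih => rw [pow_succ]; omega

theorem digit_four_mul_pow (r : ℕ) : digit (4 * 3 ^ r) r = 1 := by
  have : 0 < 3 ^ r := by positivity
  simp [digit, Nat.div_self this]

theorem color_lt {K s : ℕ} (hs : s < 4 * 3 ^ K) (p : ℕ) : color s p < K + 3 := by
  by_contra! hge
  obtain ⟨r, hr⟩ := Nat.exists_eq_add_of_le (show 3 ≤ color s p by omega)
  have hd := digit_of_color_eq hr
  have h₁ := four_mul_pow_le_of_digit_ne_zero (s := s) (r := r) (by omega)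
  have h₂ : 3 ^ K ≤ 3 ^ r := Nat.pow_le_pow_right (by norm_num) (by omega)
  omega

/-- The set of vertices of color `i`. -/
def colorClass (n i : ℕ) : Set (PalmVert n id) := {v | color v.leg v.depth = i}

/-- The distance from a vertex of the olive tree to the vertices of color `i`. -/
noncomputable def colorDist {n : ℕ} (i : ℕ) (u : PalmVert n id) : ℕ :=
  distToSet (Palm n id) u (colorClass n i)

variable {n : ℕ}

theorem colorDist_le {i : ℕ} (u : PalmVert n id) {v : PalmVert n id}
    (hv : color v.leg v.depth = i) : colorDist i u ≤ explicitDist u v :=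
  Palm.dist_eq u v ▸ distToSet_le_dist (S := colorClass n i) u hv

theorem exists_explicitDist_eq_colorDist {i : ℕ} (u : PalmVert n id) {v : PalmVert n id}
    (hv : color v.leg v.depth = i) :
    ∃ w : PalmVert n id, color w.leg w.depth = i ∧ explicitDist u w = colorDist i u := by
  obtain ⟨w, hw, h⟩ := exists_dist_eq_distToSet (G := Palm n id) (S := colorClass n i) ⟨v, hv⟩ u
  exact ⟨w, hw, Palm.dist_eq u w ▸ h⟩

theorem exists_leg_depth {s p : ℕ} (hs : s < n) (hp : p ≤ s) :
    ∃ v : PalmVert n id, v.leg = s ∧ v.depth = p + 1 :=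
  ⟨onLeg s p hs (Nat.lt_succ_of_le hp), rfl, rfl⟩

theorem leg_lt_and_depth_le (hn : 2 ≤ n) (u : PalmVert n id) :
    u.leg < n ∧ u.depth ≤ u.leg + 1 := by
  rcases eq_hub_or_eq_onLeg u with rfl | ⟨s, p, hs, hp, rfl⟩
  · simp; omega
  · simp only [id] at hp
    simp; omega

theorem colorDist_zero_le (u : PalmVert n id) : colorDist 0 u ≤ u.depth := by
  refine (colorDist_le u (v := hub) (by simp)).trans ?_
  unfold explicitDist
  split_ifs <;> simp

theorem colorDist_zero_mod_two (u : PalmVert n id) : colorDist 0 u % 2 = u.depth % 2 := by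
  obtain ⟨w, hw, h⟩ := exists_explicitDist_eq_colorDist (i := 0) u (v := hub) (by simp)
  have := even_of_color_eq_zero hw
  unfold explicitDist at h
  split_ifs at h <;> omega

theorem colorDist_main (hn : 2 ≤ n) (u : PalmVert n id) (hu : 0 < u.depth) :
    colorDist (1 + u.leg % 2) u < u.depth ∧
      colorDist (1 + u.leg % 2) u % 2 ≠ u.depth % 2 := by
  obtain ⟨hs, hp⟩ := leg_lt_and_depth_le hn u
  obtain ⟨v, hvl, hvd⟩ := exists_leg_depth hs (Nat.zero_le _)
  have hv : color v.leg v.depth = 1 + u.leg % 2 := by rw [hvl, hvd]; simp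
  have hle := colorDist_le u hv
  have hlt : colorDist (1 + u.leg % 2) u < u.depth := by
    unfold explicitDist at hle
    rw [if_pos hvl.symm] at hle
    omega
  refine ⟨hlt, ?_⟩
  obtain ⟨w, hw, h⟩ := exists_explicitDist_eq_colorDist u hv
  unfold explicitDist at h
  split_ifs at h with hl
  · have := odd_of_color_eq (hl ▸ hw)
    omega
  · omega

theorem colorDist_other (hn : 2 ≤ n) (u : PalmVert n id) :
    colorDist (2 - u.leg % 2) u =
      if u.leg % 4 = 1 ∨ u.leg % 4 = 2 then (u.depth - 2) + (2 - u.depth) else u.depth + 1 := by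
  obtain ⟨hs, hp⟩ := leg_lt_and_depth_le hn u
  obtain ⟨v, hvl, hvd⟩ := exists_leg_depth (n := n) (s := 1 - u.leg % 2) (by omega) (Nat.zero_le _)
  have hv : color v.leg v.depth = 2 - u.leg % 2 := by rw [hvl, hvd]; simp; omega
  have hle := colorDist_le u hv
  obtain ⟨w, hw, h⟩ := exists_explicitDist_eq_colorDist u hv
  have hw0 : 0 < w.depth := by
    by_contra h0
    rw [show w.depth = 0 by omega] at hw
    simp at hw
    omega
  have hw2 := fun hl : u.leg = w.leg => eq_two_of_color_eq (hl ▸ hw)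
  unfold explicitDist at h hle
  rw [if_neg (by omega)] at hle
  split_ifs with he
  · obtain ⟨x, hxl, hxd⟩ := exists_leg_depth hs (show 1 ≤ u.leg by omega)
    have hx := colorDist_le u (v := x) (i := 2 - u.leg % 2) (by rw [hxl, hxd]; exact color_two he)
    unfold explicitDist at hx
    rw [if_pos hxl.symm] at hx
    have hu0 := fun h0 => leg_eq_zero_of_depth_eq_zero (u := u) h0
    split_ifs at h <;> omega
  · split_ifs at h <;> omega

theorem colorDist_hub (hn : 2 ≤ n) {i : ℕ} (hi : i = 1 ∨ i = 2) :
    colorDist i (hub : PalmVert n id) = 1 := by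
  obtain ⟨v, hvl, hvd⟩ := exists_leg_depth (n := n) (s := i - 1) (by omega) (Nat.zero_le _)
  have hv : color v.leg v.depth = i := by rw [hvl, hvd]; simp; omega
  have hle := colorDist_le hub hv
  obtain ⟨w, hw, h⟩ := exists_explicitDist_eq_colorDist hub hv
  have hw0 : 0 < w.depth := by
    by_contra h0
    rw [show w.depth = 0 by omega] at hw
    simp at hw
    omega
  rw [explicitDist_hub] at h hle
  omega

theorem colorDist_digit (hn : 2 ≤ n) {r : ℕ} (hr : 4 * 3 ^ r < n) (u : PalmVert n id) :
    colorDist (3 + r) u =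
      if digit u.leg r = 0 then u.depth + (3 + 2 * r)
      else (u.depth - (2 + 2 * r + digit u.leg r)) + ((2 + 2 * r + digit u.leg r) - u.depth) := by
  obtain ⟨hs, hp⟩ := leg_lt_and_depth_le hn u
  have hr4 := four_add_two_mul_le r
  obtain ⟨v, hvl, hvd⟩ := exists_leg_depth hr (show 2 + 2 * r ≤ 4 * 3 ^ r by omega)
  replace hvd : v.depth = 3 + 2 * r := by omega
  have hv : color v.leg v.depth = 3 + r := by
    rw [hvl, hvd]; exact color_of_digit_eq_one (digit_four_mul_pow r)
  have hle := colorDist_le u hv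
  obtain ⟨w, hw, h⟩ := exists_explicitDist_eq_colorDist u hv
  have hw := digit_of_color_eq hw
  have hlt : digit u.leg r < 3 := Nat.mod_lt _ (by norm_num)
  unfold explicitDist at h hle
  split_ifs with he
  · have hne : u.leg ≠ v.leg := by
      intro h
      rw [h, hvl, digit_four_mul_pow] at he
      omega
    have hne' : u.leg ≠ w.leg := by
      intro h
      rw [h] at he
      omega
    rw [if_neg hne] at hle
    rw [if_neg hne'] at h
    omega
  · have hs4 := four_mul_pow_le_of_digit_ne_zero he
    obtain ⟨x, hxl, hxd⟩ := exists_leg_depth hs (p := 1 + 2 * r + digit u.leg r) (by omega)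
    have hx := colorDist_le u (v := x) (i := 3 + r) <| by
      rw [hxl, hxd]
      rcases (by omega : digit u.leg r = 1 ∨ digit u.leg r = 2) with h1 | h1
      · rw [← color_of_digit_eq_one h1]; congr 1; omega
      · rw [← color_of_digit_eq_two h1]; congr 1; omega
    unfold explicitDist at hx
    rw [if_pos hxl.symm] at hx
    have hu0 := fun h0 => leg_eq_zero_of_depth_eq_zero (u := u) h0
    split_ifs at h with hl
    · have : digit u.leg r = digit w.leg r := by rw [hl]
      omega
    · omega

theorem eq_hub_of_colorDist_eq (hn : 2 ≤ n) {u : PalmVert n id}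
    (h : ∀ i < 3, colorDist i u = colorDist i (hub : PalmVert n id)) : u = hub := by
  have h0 := h 0 (by omega)
  have hp := colorDist_zero_mod_two u
  have hp' := colorDist_zero_mod_two (hub : PalmVert n id)
  have h2 := h (2 - u.leg % 2) (by omega)
  rw [colorDist_hub hn (by omega), colorDist_other hn u] at h2
  simp only [depth_hub] at hp'
  have hd : u.depth = 0 := by
    split_ifs at h2 <;> omega
  exact ext_leg_depth (by simpa using leg_eq_zero_of_depth_eq_zero hd) (by simpa using hd)

theorem leg_mod_two_eq_of_colorDist_eq (hn : 2 ≤ n) {u v : PalmVert n id} (hu : 0 < u.depth)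
    (hv : 0 < v.depth) (h : ∀ i < 3, colorDist i u = colorDist i v) :
    u.leg % 2 = v.leg % 2 := by
  by_contra hne
  have hu1 := colorDist_main hn u hu
  have hv1 := colorDist_main hn v hv
  have hu2 := colorDist_other hn u
  have hv2 := colorDist_other hn v
  rw [show 2 - u.leg % 2 = 1 + v.leg % 2 by omega, h _ (by omega)] at hu2
  rw [show 2 - v.leg % 2 = 1 + u.leg % 2 by omega, ← h _ (by omega)] at hv2
  have hp := colorDist_zero_mod_two u
  have hq := colorDist_zero_mod_two v
  have h0 := h 0 (by omega)
  split_ifs at hu2 hv2 <;> omega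

theorem colorDist_zero_of_leg_eq_two (hn : 2 ≤ n) {u : PalmVert n id} (hl : u.leg = 2)
    (hd : u.depth = 3) : 1 < colorDist 0 u := by
  obtain ⟨w, hw, h⟩ := exists_explicitDist_eq_colorDist (i := 0) u (v := hub) (by simp)
  have hwp := even_of_color_eq_zero hw
  have hwd := leg_lt_and_depth_le hn w
  unfold explicitDist at h
  split_ifs at h with hwl
  · have : w.depth ≠ 2 := by
      intro h2
      rw [h2, ← hwl, hl, color_two (by norm_num)] at hw
      omega
    omega
  · omega

theorem depth_eq_of_colorDist_eq (hn : 2 ≤ n) {K : ℕ} (hK : n ≤ 4 * 3 ^ K)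
    (hK' : K = 0 ∨ 4 * 3 ^ (K - 1) < n) {u v : PalmVert n id} (hu : 0 < u.depth)
    (hv : 0 < v.depth) (h : ∀ i < K + 3, colorDist i u = colorDist i v) :
    u.depth = v.depth := by
  by_contra! hne
  wlog hlt : u.depth < v.depth generalizing u v
  · exact this hv hu (fun i hi => (h i hi).symm) hne.symm (by omega)
  have hmod := leg_mod_two_eq_of_colorDist_eq hn hu hv fun i hi => h i (by omega)
  have hu2 := colorDist_other hn u
  have hv2 := colorDist_other hn v
  rw [← hmod, ← h _ (by omega)] at hv2
  have h0 := h 0 (by omega)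
  have hp := colorDist_zero_mod_two u
  have hq := colorDist_zero_mod_two v
  have hcase : u.depth = 1 ∧ v.depth = 3 ∧ (v.leg % 4 = 1 ∨ v.leg % 4 = 2) := by
    split_ifs at hu2 hv2 <;> omega
  obtain ⟨hu1, hv3, hv4⟩ := hcase
  rcases hK' with rfl | hK'
  · have hvl := leg_lt_and_depth_le hn v
    have := colorDist_zero_of_leg_eq_two hn (u := v) (by omega) hv3
    have := colorDist_zero_le u
    omega
  · rcases K with _ | K
    · have hvl := leg_lt_and_depth_le hn v
      have := colorDist_zero_of_leg_eq_two hn (u := v) (by omega) hv3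
      have := colorDist_zero_le u
      omega
    have h1 : 1 ≤ 3 ^ K := Nat.one_le_pow _ _ (by norm_num)
    have hr : 4 * 3 ^ 0 < n := by simp at hK' ⊢; omega
    have h3 := h 3 (by omega)
    have hu3 := colorDist_digit hn hr u
    have hv3 := colorDist_digit hn hr v
    have hud : digit u.leg 0 < 3 := Nat.mod_lt _ (by norm_num)
    have hvd : digit v.leg 0 < 3 := Nat.mod_lt _ (by norm_num)
    simp only [Nat.add_zero] at hu3 hv3
    split_ifs at hu3 hv3 <;> omega

theorem eq_of_colorDist_eq (hn : 2 ≤ n) {K : ℕ} (hK : n ≤ 4 * 3 ^ K)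
    (hK' : K = 0 ∨ 4 * 3 ^ (K - 1) < n) {u v : PalmVert n id}
    (h : ∀ i < K + 3, colorDist i u = colorDist i v) : u = v := by
  have hhub : ∀ w : PalmVert n id, w.depth = 0 → w = hub := fun w hw =>
    ext_leg_depth (by simpa using leg_eq_zero_of_depth_eq_zero hw) (by simpa using hw)
  rcases Nat.eq_zero_or_pos v.depth with hv | hv
  · obtain rfl := hhub v hv
    exact eq_hub_of_colorDist_eq hn fun i hi => h i (by omega)
  rcases Nat.eq_zero_or_pos u.depth with hu | hu
  · obtain rfl := hhub u hu
    exact (eq_hub_of_colorDist_eq hn fun i hi => (h i (by omega)).symm).symm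
  have hd := depth_eq_of_colorDist_eq hn hK hK' hu hv h
  have hmod := leg_mod_two_eq_of_colorDist_eq hn hu hv fun i hi => h i (by omega)
  have hmod4 : u.leg % 4 = v.leg % 4 := by
    have hu2 := colorDist_other hn u
    have hv2 := colorDist_other hn v
    rw [← hmod, ← h _ (by omega)] at hv2
    split_ifs at hu2 hv2 <;> omega
  have hdigit : ∀ r < K, u.leg / 4 / 3 ^ r % 3 = v.leg / 4 / 3 ^ r % 3 := by
    intro r hr
    have hrn : 4 * 3 ^ r < n := by
      have : 3 ^ r ≤ 3 ^ (K - 1) := Nat.pow_le_pow_right (by norm_num) (by omega)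
      omega
    have hur := colorDist_digit hn hrn u
    have hvr := colorDist_digit hn hrn v
    rw [← h _ (by omega)] at hvr
    have hud : digit u.leg r < 3 := Nat.mod_lt _ (by norm_num)
    have hvd : digit v.leg r < 3 := Nat.mod_lt _ (by norm_num)
    change digit u.leg r = digit v.leg r
    split_ifs at hur hvr <;> omega
  have hu4 := (leg_lt_and_depth_le hn u).1
  have hv4 := (leg_lt_and_depth_le hn v).1
  have := eq_of_ternary_digits_eq (by omega) (by omega) hdigit
  exact ext_leg_depth (by omega) hd

theorem exists_isLocatingColoring (hn : 2 ≤ n) {K : ℕ} (hK : n ≤ 4 * 3 ^ K)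
    (hK' : K = 0 ∨ 4 * 3 ^ (K - 1) < n) :
    ∃ c : PalmVert n id → Fin (K + 3), IsLocatingColoring (Palm n id) c := by
  have hlt (v : PalmVert n id) : color v.leg v.depth < K + 3 :=
    color_lt ((leg_lt_and_depth_le hn v).1.trans_le hK) _
  refine ⟨fun v => ⟨color v.leg v.depth, hlt v⟩, fun u v huv heq => ?_, fun u v hne => ?_⟩
  · have hadj : ∀ u v : PalmVert n id, v.depth = u.depth + 1 →
        (u.depth = 0 ∨ u.leg = v.leg) → color u.leg u.depth ≠ color v.leg v.depth := by
      rintro u v hd (h0 | hl)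
      · rw [hd, h0]
        simp
        omega
      · rw [hd, hl]
        exact color_ne_color_succ _ _
    have heq := Fin.mk.inj_iff.1 heq
    rcases Palm.adj_iff.1 huv with ⟨h₁, h₂⟩ | ⟨h₁, h₂⟩
    · exact hadj u v h₁ h₂ heq
    · exact hadj v u h₁ (h₂.imp_right Eq.symm) heq.symm
  · by_contra! hall
    refine hne (eq_of_colorDist_eq hn hK hK' fun i hi => ?_)
    have hpre : (fun v : PalmVert n id => (⟨color v.leg v.depth, hlt v⟩ : Fin (K + 3))) ⁻¹'
        {⟨i, hi⟩} = colorClass n i := by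
      ext v
      simp [colorClass]
    simpa [hpre, colorDist] using hall ⟨i, hi⟩

theorem nine_mul_le_of_isLocatingColoring (hn : 2 ≤ n) {k : ℕ} {c : PalmVert n id → Fin k}
    (hc : IsLocatingColoring (Palm n id) c) : 9 * n ≤ 4 * 3 ^ (k - 1) := by
  have hpos (s : Fin n) : 0 < id ((s : ℕ) + 1) := Nat.succ_pos _
  refine hc.nine_mul_le Palm.connected (x := hub) (f := fun s => onLeg s 0 s.2 (hpos s))
    (fun s t hst => Fin.ext ?_) (fun s => Palm.adj_hub_onLeg s.2 (hpos s)) (by omega)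
  simpa using congrArg PalmVert.leg hst

theorem locatingChromaticNumber_eq (hn : 2 ≤ n) {K : ℕ} (hK : n ≤ 4 * 3 ^ K)
    (hK' : K = 0 ∨ 4 * 3 ^ (K - 1) < n) : locatingChromaticNumber (Palm n id) = K + 3 := by
  refine le_antisymm (Nat.sInf_le (exists_isLocatingColoring hn hK hK'))
    (le_csInf ⟨_, exists_isLocatingColoring hn hK hK'⟩ ?_)
  rintro k ⟨c, hc⟩
  by_contra! hlt
  have h9 := nine_mul_le_of_isLocatingColoring hn hc
  have hpow : 3 ^ (k - 1) ≤ 3 ^ (K + 1) := Nat.pow_le_pow_right (by norm_num) (by omega)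
  rcases K with _ | K
  · omega
  · simp only [Nat.add_sub_cancel, pow_succ] at hK' hpow
    omega

end Olive

/-- For every `n ≥ 2`, the olive tree `O_n = S_n(1, 2, …, n)` satisfies
`χ_L(O_n) = ⌈log_3(n/4)⌉ + 3`. -/
theorem locatingChromaticNumber_olive (n : ℕ) (hn : 2 ≤ n) :
    (locatingChromaticNumber (Palm n id) : ℤ) = ⌈Real.logb 3 ((n : ℝ) / 4)⌉ + 3 := by
  have hn0 : (0 : ℝ) < n := by exact_mod_cast (by omega : 0 < n)
  obtain ⟨K, hK⟩ : ∃ K : ℕ, ⌈Real.logb 3 ((n : ℝ) / 4)⌉ = K := by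
    refine Int.eq_ofNat_of_zero_le ?_
    rw [← Int.sub_one_lt_iff, Int.lt_ceil, Real.lt_logb_iff_rpow_lt (by norm_num) (by positivity)]
    have : (2 : ℝ) ≤ n := by exact_mod_cast hn
    norm_num [Real.rpow_neg_one]
    linarith
  rw [hK]
  obtain ⟨hlt, hle⟩ := Int.ceil_eq_iff.1 hK
  rw [Int.cast_natCast, Real.logb_le_iff_le_rpow (by norm_num) (by positivity),
    Real.rpow_natCast, div_le_iff₀ (by norm_num)] at hle
  rw [Olive.locatingChromaticNumber_eq hn (K := K)]
  · push_cast
    ring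
  · rw [mul_comm]
    exact_mod_cast hle
  · rcases K with _ | K
    · exact Or.inl rfl
    · right
      rw [show (((K + 1 : ℕ) : ℤ) : ℝ) - 1 = (K : ℕ) by push_cast; ring,
        Real.lt_logb_iff_rpow_lt (by norm_num) (by positivity), Real.rpow_natCast,
        lt_div_iff₀ (by norm_num)] at hlt
      rw [Nat.add_sub_cancel, mul_comm]
      exact_mod_cast hlt
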